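/- Assume (H1)–(H4). If ∫_{t₀}^∞ r₁(v)^{-1/α} ( ∫_{t₀}^v r₂(u)^{-1/β} ( ∫_{t₀}^u q(s) ds )^{1/β} du )^{1/α} dv = ∞, then equation (E) has property A, i.e. every solution of (E) is either oscillatory or tends to 0 as t → ∞. -/

import Mathlib

open Filter MeasureTheory Set

/-- Signed power: for exponents that are quotients of odd positive integers,
`x ^ p` preserves the sign of `x`. -/
noncomputable def opow (x p : ℝ) : ℝ := Real.sign x * |x| ^ p

/-- `L₁y = r₁ · (y')^α`. -/
noncomputable def L1 (r₁ : ℝ → ℝ) (α : ℝ) (y : ℝ → ℝ) : ℝ → ℝ :=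
  fun t => r₁ t * opow (deriv y t) α

/-- `L₂y = r₂ · ((L₁y)')^β`. -/
noncomputable def L2 (r₁ r₂ : ℝ → ℝ) (α β : ℝ) (y : ℝ → ℝ) : ℝ → ℝ :=
  fun t => r₂ t * opow (deriv (L1 r₁ α y) t) β

/-- `L₃y = (L₂y)'`. -/
noncomputable def L3 (r₁ r₂ : ℝ → ℝ) (α β : ℝ) (y : ℝ → ℝ) : ℝ → ℝ :=
  deriv (L2 r₁ r₂ α β y)

/-- A real number which is a quotient of odd positive integers. -/
def OddQuotient (x : ℝ) : Prop :=
  ∃ m n : ℕ, Odd m ∧ Odd n ∧ 0 < m ∧ 0 < n ∧ x = (m : ℝ) / (n : ℝ)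

/-- The standing hypotheses (H1)–(H4). -/
structure Hyp (t₀ α β γ : ℝ) (r₁ r₂ q σ : ℝ → ℝ) : Prop where
  ht₀ : 0 < t₀
  hα : OddQuotient α
  hβ : OddQuotient β
  hγ : OddQuotient γ
  hr₁c : ContinuousOn r₁ (Set.Ici t₀)
  hr₂c : ContinuousOn r₂ (Set.Ici t₀)
  hr₁p : ∀ t, t₀ ≤ t → 0 < r₁ t
  hr₂p : ∀ t, t₀ ≤ t → 0 < r₂ t
  /-- noncanonical: `π₁(t₀) = ∫_{t₀}^∞ r₁^{-1/α} < ∞` -/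
  hπ₁fin : IntegrableOn (fun s => r₁ s ^ (-(1/α))) (Set.Ici t₀)
  /-- noncanonical: `π₂(t₀) = ∫_{t₀}^∞ r₂^{-1/β} < ∞` -/
  hπ₂fin : IntegrableOn (fun s => r₂ s ^ (-(1/β))) (Set.Ici t₀)
  hqc : ContinuousOn q (Set.Ici t₀)
  hq0 : ∀ t, t₀ ≤ t → 0 ≤ q t
  /-- `q` does not vanish eventually -/
  hqnv : ∀ T, t₀ ≤ T → ∃ t, T ≤ t ∧ q t ≠ 0
  hσd : DifferentiableOn ℝ σ (Set.Ici t₀)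
  hσd' : ContinuousOn (deriv σ) (Set.Ici t₀)
  hσpos : ∀ t, t₀ ≤ t → 0 < σ t
  hσadv : ∀ t, t₀ ≤ t → t ≤ σ t
  hσmono : ∀ t, t₀ ≤ t → 0 ≤ deriv σ t

/-- `y` is a (nontrivial) solution of equation (E) on some half-line `[T,∞) ⊆ [t₀,∞)`. -/
def IsSolution (t₀ α β γ : ℝ) (r₁ r₂ q σ y : ℝ → ℝ) : Prop :=
  ∃ T, t₀ ≤ T ∧
    ContinuousOn y (Set.Ici T) ∧
    DifferentiableOn ℝ y (Set.Ici T) ∧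
    ContinuousOn (L1 r₁ α y) (Set.Ici T) ∧
    DifferentiableOn ℝ (L1 r₁ α y) (Set.Ici T) ∧
    ContinuousOn (L2 r₁ r₂ α β y) (Set.Ici T) ∧
    DifferentiableOn ℝ (L2 r₁ r₂ α β y) (Set.Ici T) ∧
    (∀ t, T ≤ t → L3 r₁ r₂ α β y t + q t * opow (y (σ t)) γ = 0) ∧
    (∀ T', T ≤ T' → ∃ t, T' ≤ t ∧ y t ≠ 0)

/-- A function is oscillatory if it has arbitrarily large zeros. -/
def Oscillatory (y : ℝ → ℝ) : Prop := ∀ T : ℝ, ∃ t, T ≤ t ∧ y t = 0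

/-- Equation (E) has property A: every solution is oscillatory or tends to `0`. -/
def PropertyA (t₀ α β γ : ℝ) (r₁ r₂ q σ : ℝ → ℝ) : Prop :=
  ∀ y : ℝ → ℝ, IsSolution t₀ α β γ r₁ r₂ q σ y →
    Oscillatory y ∨ Filter.Tendsto y Filter.atTop (nhds 0)

/-- Equation (E) is oscillatory: every solution is oscillatory. -/
def OscillatoryEq (t₀ α β γ : ℝ) (r₁ r₂ q σ : ℝ → ℝ) : Prop :=
  ∀ y : ℝ → ℝ, IsSolution t₀ α β γ r₁ r₂ q σ y → Oscillatory y

/-- `π₁(t) = ∫_t^∞ r₁(s)^{-1/α} ds`. -/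
noncomputable def pi1 (r₁ : ℝ → ℝ) (α : ℝ) (t : ℝ) : ℝ :=
  ∫ s in Set.Ioi t, r₁ s ^ (-(1/α))

/-- `π₂(t) = ∫_t^∞ r₂(s)^{-1/β} ds`. -/
noncomputable def pi2 (r₂ : ℝ → ℝ) (β : ℝ) (t : ℝ) : ℝ :=
  ∫ s in Set.Ioi t, r₂ s ^ (-(1/β))

/-- `π(t) = ∫_t^∞ r₁(s)^{-1/α} · π₂(s)^{1/α} ds`. -/
noncomputable def piInf (r₁ r₂ : ℝ → ℝ) (α β : ℝ) (t : ℝ) : ℝ :=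
  ∫ s in Set.Ioi t, r₁ s ^ (-(1/α)) * (pi2 r₂ β s) ^ (1/α)

/-- The class `S₁`: `y > 0, L₁y < 0, L₂y < 0, L₃y < 0` on `[t₁,∞)`. -/
def InS1 (r₁ r₂ : ℝ → ℝ) (α β : ℝ) (y : ℝ → ℝ) (t₁ : ℝ) : Prop :=
  ∀ t, t₁ ≤ t → 0 < y t ∧ L1 r₁ α y t < 0 ∧ L2 r₁ r₂ α β y t < 0 ∧ L3 r₁ r₂ α β y t < 0

/-- The class `S₂`: `y > 0, L₁y < 0, L₂y > 0, L₃y < 0` on `[t₁,∞)`. -/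
def InS2 (r₁ r₂ : ℝ → ℝ) (α β : ℝ) (y : ℝ → ℝ) (t₁ : ℝ) : Prop :=
  ∀ t, t₁ ≤ t → 0 < y t ∧ L1 r₁ α y t < 0 ∧ 0 < L2 r₁ r₂ α β y t ∧ L3 r₁ r₂ α β y t < 0

/-- The class `S₃`: `y > 0, L₁y > 0, L₂y > 0, L₃y < 0` on `[t₁,∞)`. -/
def InS3 (r₁ r₂ : ℝ → ℝ) (α β : ℝ) (y : ℝ → ℝ) (t₁ : ℝ) : Prop :=
  ∀ t, t₁ ≤ t → 0 < y t ∧ 0 < L1 r₁ α y t ∧ 0 < L2 r₁ r₂ α β y t ∧ L3 r₁ r₂ α β y t < 0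

/-- The class `S₄`: `y > 0, L₁y > 0, L₂y < 0, L₃y < 0` on `[t₁,∞)`. -/
def InS4 (r₁ r₂ : ℝ → ℝ) (α β : ℝ) (y : ℝ → ℝ) (t₁ : ℝ) : Prop :=
  ∀ t, t₁ ≤ t → 0 < y t ∧ 0 < L1 r₁ α y t ∧ L2 r₁ r₂ α β y t < 0 ∧ L3 r₁ r₂ α β y t < 0


lemma oddQ_pos {x : ℝ} (h : OddQuotient x) : 0 < x := by
  obtain ⟨m, n, -, -, hm, hn, rfl⟩ := h
  positivity

lemma opow_neg' (x p : ℝ) : opow (-x) p = - opow x p := by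
  unfold opow
  rw [Real.sign_neg, abs_neg]; ring

lemma opow_of_pos {x : ℝ} (hx : 0 < x) (p : ℝ) : opow x p = x ^ p := by
  unfold opow
  rw [Real.sign_of_pos hx, abs_of_pos hx, one_mul]

lemma nonneg_of_opow {x p : ℝ} (hp : 0 < p) (h : 0 ≤ opow x p) : 0 ≤ x := by
  by_contra hx
  push Not at hx
  have h1 : opow (-x) p = (-x) ^ p := opow_of_pos (by linarith) p
  have h2 : 0 < (-x) ^ p := Real.rpow_pos_of_pos (by linarith) p
  rw [opow_neg'] at h1
  linarith

lemma nonpos_of_opow {x p : ℝ} (hp : 0 < p) (h : opow x p ≤ 0) : x ≤ 0 := by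
  have : 0 ≤ -x := nonneg_of_opow (p := p) hp (by rw [opow_neg']; linarith)
  linarith

lemma le_of_opow {r d p k Q : ℝ} (hp : 0 < p) (hr : 0 < r) (hk : 0 < k) (hQ : 0 ≤ Q)
    (h : r * opow d p ≤ -k * Q) : d ≤ -(k ^ (1/p)) * (r ^ (-(1/p)) * Q ^ (1/p)) := by
  have hd : d ≤ 0 := by
    apply nonpos_of_opow hp
    have : 0 ≤ k * Q := by positivity
    by_contra hc
    push Not at hc
    have := mul_pos hr hc
    linarith
  rcases hd.eq_or_lt with rfl | hd
  · have h0 : opow 0 p = 0 := by simp [opow]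
    rw [h0] at h
    have : Q = 0 := by
      have : k * Q ≤ 0 := by linarith
      nlinarith
    subst this
    rw [Real.zero_rpow (by positivity)]
    simp
  · have h1 : opow (-d) p = (-d) ^ p := opow_of_pos (by linarith) p
    rw [opow_neg'] at h1
    have h2 : k * (r⁻¹ * Q) ≤ (-d) ^ p := by
      rw [← h1]
      have : k * (r⁻¹ * Q) = (k * Q) / r := by field_simp
      rw [this, div_le_iff₀ hr]
      linarith
    have h3 : (k * (r⁻¹ * Q)) ^ (1/p) ≤ ((-d) ^ p) ^ (1/p) :=
      Real.rpow_le_rpow (by positivity) h2 (by positivity)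
    rw [← Real.rpow_mul (by linarith), mul_one_div_cancel hp.ne', Real.rpow_one,
      Real.mul_rpow hk.le (by positivity), Real.mul_rpow (by positivity) hQ,
      Real.inv_rpow hr.le, ← Real.rpow_neg hr.le] at h3
    linarith

/-- eventually of one sign -/
def SE (f : ℝ → ℝ) : Prop := ∃ T, (∀ t, T ≤ t → 0 ≤ f t) ∨ (∀ t, T ≤ t → f t ≤ 0)

lemma mono_of {f : ℝ → ℝ} {T : ℝ} (hf : ∀ t, T ≤ t → DifferentiableAt ℝ f t)
    (h : ∀ t, T ≤ t → 0 ≤ deriv f t) : MonotoneOn f (Ici T) :=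
  monotoneOn_of_deriv_nonneg (convex_Ici T)
    (fun t ht => (hf t ht).continuousAt.continuousWithinAt)
    (fun t ht => (hf t (interior_subset ht)).differentiableWithinAt)
    (fun t ht => h t (interior_subset ht))

lemma anti_of {f : ℝ → ℝ} {T : ℝ} (hf : ∀ t, T ≤ t → DifferentiableAt ℝ f t)
    (h : ∀ t, T ≤ t → deriv f t ≤ 0) : AntitoneOn f (Ici T) :=
  antitoneOn_of_deriv_nonpos (convex_Ici T)
    (fun t ht => (hf t ht).continuousAt.continuousWithinAt)
    (fun t ht => (hf t (interior_subset ht)).differentiableWithinAt)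
    (fun t ht => h t (interior_subset ht))

lemma SE_of_deriv {f : ℝ → ℝ} {T : ℝ} (hf : ∀ t, T ≤ t → DifferentiableAt ℝ f t)
    (h : SE (deriv f)) : SE f := by
  obtain ⟨S, h | h⟩ := h
  · have hm : MonotoneOn f (Ici (max T S)) :=
      mono_of (fun t ht => hf t (le_trans (le_max_left _ _) ht))
        (fun t ht => h t (le_trans (le_max_right _ _) ht))
    by_cases hc : ∃ t, max T S ≤ t ∧ 0 ≤ f t
    · obtain ⟨t, ht, hft⟩ := hc
      exact ⟨t, Or.inl fun s hs => hft.trans (hm ht (le_trans ht hs) hs)⟩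
    · push Not at hc
      exact ⟨max T S, Or.inr fun s hs => (hc s hs).le⟩
  · have hm : AntitoneOn f (Ici (max T S)) :=
      anti_of (fun t ht => hf t (le_trans (le_max_left _ _) ht))
        (fun t ht => h t (le_trans (le_max_right _ _) ht))
    by_cases hc : ∃ t, max T S ≤ t ∧ f t ≤ 0
    · obtain ⟨t, ht, hft⟩ := hc
      exact ⟨t, Or.inr fun s hs => (hm ht (le_trans ht hs) hs).trans hft⟩
    · push Not at hc
      exact ⟨max T S, Or.inl fun s hs => (hc s hs).le⟩

/-- comparison -/
lemma cmp_lemma {f g : ℝ → ℝ} {T k : ℝ} (hk : 0 < k)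
    (hf : ∀ t, T ≤ t → DifferentiableAt ℝ f t) (hg : ∀ t, T ≤ t → DifferentiableAt ℝ g t)
    (h : ∀ t, T ≤ t → deriv f t ≤ -k * deriv g t) (hgt : Tendsto g atTop atTop) :
    ∃ T', T ≤ T' ∧ ∀ t, T' ≤ t → f t ≤ -(k/2) * g t := by
  have hd : ∀ t, T ≤ t → HasDerivAt (fun t => f t + k * g t) (deriv f t + k * deriv g t) t :=
    fun t ht => (hf t ht).hasDerivAt.add ((hg t ht).hasDerivAt.const_mul k)
  have ha : AntitoneOn (fun t => f t + k * g t) (Ici T) := by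
    apply anti_of (fun t ht => (hd t ht).differentiableAt)
    intro t ht
    rw [(hd t ht).deriv]
    linarith [h t ht]
  obtain ⟨S, hS⟩ := eventually_atTop.1 (hgt.eventually_ge_atTop ((f T + k * g T) / (k/2)))
  refine ⟨max T S, le_max_left _ _, fun t ht => ?_⟩
  have h1 := hS t (le_trans (le_max_right _ _) ht)
  have h2 : f t + k * g t ≤ f T + k * g T :=
    ha self_mem_Ici (le_trans (le_max_left _ _) ht) (le_trans (le_max_left _ _) ht)
  rw [div_le_iff₀ (by positivity)] at h1
  linarith

lemma prim_eq {φ : ℝ → ℝ} {a t : ℝ} (ht : a ≤ t) :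
    (∫ s in a..t, φ s) = ∫ s in a..t, φ (max a s) := by
  apply intervalIntegral.integral_congr
  intro s hs
  rw [uIcc_of_le ht] at hs
  simp [max_eq_right hs.1]

lemma ext_cont {φ : ℝ → ℝ} {a : ℝ} (hφ : ContinuousOn φ (Ici a)) :
    Continuous (fun s => φ (max a s)) :=
  hφ.comp_continuous (by fun_prop) (fun s => mem_Ici.2 (le_max_left _ _))

lemma prim_deriv {φ : ℝ → ℝ} {a t : ℝ} (hφ : ContinuousOn φ (Ici a)) (ht : a < t) :
    HasDerivAt (fun t => ∫ s in a..t, φ s) (φ t) t := by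
  have h := (ext_cont hφ).integral_hasStrictDerivAt a t |>.hasDerivAt
  rw [max_eq_right ht.le] at h
  apply h.congr_of_eventuallyEq
  filter_upwards [Ioi_mem_nhds ht] with s hs
  exact prim_eq (le_of_lt hs)

lemma prim_cont {φ : ℝ → ℝ} {a : ℝ} (hφ : ContinuousOn φ (Ici a)) :
    ContinuousOn (fun t => ∫ s in a..t, φ s) (Ici a) := by
  have h : Continuous (fun t => ∫ s in a..t, φ (max a s)) :=
    intervalIntegral.continuous_primitive
      (fun x y => (ext_cont hφ).intervalIntegrable x y) a
  exact h.continuousOn.congr fun t ht => prim_eq ht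

lemma prim_mono {φ : ℝ → ℝ} {a : ℝ} (hφ : ContinuousOn φ (Ici a))
    (h0 : ∀ t, a ≤ t → 0 ≤ φ t) : MonotoneOn (fun t => ∫ s in a..t, φ s) (Ici a) :=
  monotoneOn_of_deriv_nonneg (convex_Ici a) (prim_cont hφ)
    (fun t ht => by
      rw [interior_Ici] at ht
      exact (prim_deriv hφ ht).differentiableAt.differentiableWithinAt)
    (fun t ht => by
      rw [interior_Ici] at ht
      rw [(prim_deriv hφ ht).deriv]
      exact h0 t (le_of_lt ht))

lemma prim_nonneg {φ : ℝ → ℝ} {a t : ℝ}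
    (h0 : ∀ t, a ≤ t → 0 ≤ φ t) (ht : a ≤ t) : 0 ≤ ∫ s in a..t, φ s :=
  intervalIntegral.integral_nonneg ht fun s hs => h0 s hs.1

/-- if the weighted primitive diverges then so does the inner function -/
lemma inner_div {w g : ℝ → ℝ} {a p : ℝ} (hp : 0 < p) (hwc : ContinuousOn w (Ici a))
    (hw0 : ∀ t, a ≤ t → 0 ≤ w t) (hwi : IntegrableOn w (Ici a))
    (hgc : ContinuousOn g (Ici a)) (hg0 : ∀ t, a ≤ t → 0 ≤ g t) (hgm : MonotoneOn g (Ici a))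
    (h : Tendsto (fun t => ∫ s in a..t, w s * g s ^ p) atTop atTop) :
    Tendsto g atTop atTop := by
  have key : ∀ M, ∃ T, a ≤ T ∧ M ≤ g T := by
    intro M
    by_contra hc
    push Not at hc
    obtain ⟨t, ht1, ht2⟩ := ((h.eventually_gt_atTop ((∫ s in Ici a, w s) * M ^ p)).and
      (eventually_ge_atTop a)).exists
    have hM : 0 ≤ M := (hg0 a le_rfl).trans (hc a le_rfl).le
    have hsub : Icc a t ⊆ Ici a := fun x hx => hx.1
    have i1 : IntervalIntegrable (fun s => w s * g s ^ p) volume a t := by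
      apply ContinuousOn.intervalIntegrable
      rw [uIcc_of_le ht2]
      exact ((hwc.mul (hgc.rpow_const fun x _ => Or.inr hp.le))).mono hsub
    have i2 : IntervalIntegrable (fun s => w s * M ^ p) volume a t := by
      apply ContinuousOn.intervalIntegrable
      rw [uIcc_of_le ht2]
      exact (hwc.mul continuousOn_const).mono hsub
    have h1 : (∫ s in a..t, w s * g s ^ p) ≤ ∫ s in a..t, w s * M ^ p := by
      apply intervalIntegral.integral_mono_on ht2 i1 i2
      intro s hs
      exact mul_le_mul_of_nonneg_left
        (Real.rpow_le_rpow (hg0 s hs.1) (hc s hs.1).le hp.le) (hw0 s hs.1)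
    rw [intervalIntegral.integral_mul_const] at h1
    have h2 : (∫ s in a..t, w s) ≤ ∫ s in Ici a, w s := by
      rw [intervalIntegral.integral_of_le ht2]
      apply setIntegral_mono_set hwi
      · exact (ae_restrict_iff' measurableSet_Ici).2 (Eventually.of_forall fun s hs => hw0 s hs)
      · exact (show Ioc a t ⊆ Ici a from fun x hx => hx.1.le).eventuallyLE
    have h3 := mul_le_mul_of_nonneg_right h2 (Real.rpow_nonneg hM p)
    linarith
  rw [tendsto_atTop_atTop]
  intro M
  obtain ⟨T, hT, hM⟩ := key M
  exact ⟨T, fun t ht => hM.trans (hgm hT (le_trans hT ht) ht)⟩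

lemma main_pos (t₀ α β γ : ℝ) (r₁ r₂ q σ : ℝ → ℝ)
    (H : Hyp t₀ α β γ r₁ r₂ q σ)
    (hdiv : Filter.Tendsto (fun t => ∫ v in t₀..t, r₁ v ^ (-(1/α)) *
      (∫ u in t₀..v, r₂ u ^ (-(1/β)) * (∫ s in t₀..u, q s) ^ (1/β)) ^ (1/α))
      Filter.atTop Filter.atTop) (y : ℝ → ℝ) (T : ℝ) (hT : t₀ < T)
    (hy : ∀ t, T ≤ t → DifferentiableAt ℝ y t)
    (hL1 : ∀ t, T ≤ t → DifferentiableAt ℝ (L1 r₁ α y) t)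
    (hL2 : ∀ t, T ≤ t → DifferentiableAt ℝ (L2 r₁ r₂ α β y) t)
    (hE : ∀ t, T ≤ t → L3 r₁ r₂ α β y t + q t * opow (y (σ t)) γ = 0)
    (hpos : ∀ t, T ≤ t → 0 < y t) : Tendsto y atTop (nhds 0) := by
  have hα := oddQ_pos H.hα
  have hβ := oddQ_pos H.hβ
  have hγ := oddQ_pos H.hγ
  have hσT : ∀ t, T ≤ t → t ≤ σ t := fun t ht => H.hσadv t (hT.le.trans ht)
  -- y' has one sign
  have s2 : SE (L2 r₁ r₂ α β y) := by
    apply SE_of_deriv hL2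
    refine ⟨T, Or.inr fun t ht => ?_⟩
    have h1 := hE t ht
    have h2 := hpos (σ t) (ht.trans (hσT t ht))
    rw [opow_of_pos h2] at h1
    have h3 := mul_nonneg (H.hq0 t (hT.le.trans ht)) (Real.rpow_pos_of_pos h2 γ).le
    unfold L3 at h1
    linarith
  have sgn : ∀ (r f : ℝ → ℝ) (p : ℝ), 0 < p → (∀ t, t₀ ≤ t → 0 < r t) →
      SE (fun t => r t * opow (f t) p) → SE f := by
    rintro r f p hp hr ⟨S, h | h⟩
    · refine ⟨max t₀ S, Or.inl fun t ht => nonneg_of_opow hp ?_⟩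
      exact nonneg_of_mul_nonneg_right (h t (le_trans (le_max_right _ _) ht))
        (hr t (le_trans (le_max_left _ _) ht))
    · refine ⟨max t₀ S, Or.inr fun t ht => nonpos_of_opow hp ?_⟩
      have h1 := h t (le_trans (le_max_right _ _) ht)
      have h2 := hr t (le_trans (le_max_left _ _) ht)
      by_contra hc
      push Not at hc
      have := mul_pos h2 hc
      linarith
  have s1 : SE (deriv y) := sgn r₁ _ α hα H.hr₁p
    (SE_of_deriv hL1 (sgn r₂ _ β hβ H.hr₂p s2))
  -- reduction to a positive lower bound
  by_cases hlow : ∃ c S, 0 < c ∧ ∀ t, S ≤ t → c ≤ y t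
  swap
  · obtain ⟨S, h | h⟩ := s1
    · exfalso
      apply hlow
      have hm : MonotoneOn y (Ici (max T S)) :=
        mono_of (fun t ht => hy t (le_trans (le_max_left _ _) ht))
          (fun t ht => h t (le_trans (le_max_right _ _) ht))
      exact ⟨y (max T S), max T S, hpos _ (le_max_left _ _),
        fun t ht => hm self_mem_Ici ht ht⟩
    · have hm : AntitoneOn y (Ici (max T S)) :=
        anti_of (fun t ht => hy t (le_trans (le_max_left _ _) ht))
          (fun t ht => h t (le_trans (le_max_right _ _) ht))
      push Not at hlow
      rw [Metric.tendsto_atTop]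
      intro ε hε
      obtain ⟨t, ht, hyt⟩ := hlow ε (max T S) hε
      refine ⟨t, fun s hs => ?_⟩
      have h1 := hpos s (((le_max_left _ _).trans ht).trans hs)
      have h2 := hm ht (le_trans ht hs) hs
      rw [Real.dist_eq, sub_zero, abs_of_pos h1]
      linarith
  exfalso
  obtain ⟨c, S, hc, hlow⟩ := hlow
  -- the iterated primitives
  set Q : ℝ → ℝ := fun u => ∫ s in t₀..u, q s with hQdef
  set w2 : ℝ → ℝ := fun u => r₂ u ^ (-(1/β)) with hw2
  set w1 : ℝ → ℝ := fun u => r₁ u ^ (-(1/α)) with hw1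
  set G : ℝ → ℝ := fun v => ∫ u in t₀..v, w2 u * Q u ^ (1/β) with hGdef
  have hdiv' : Tendsto (fun t => ∫ v in t₀..t, w1 v * G v ^ (1/α)) atTop atTop := hdiv
  set F : ℝ → ℝ := fun t => ∫ v in t₀..t, w1 v * G v ^ (1/α) with hFdef
  have w2c : ContinuousOn w2 (Ici t₀) := H.hr₂c.rpow_const fun x hx => Or.inl (H.hr₂p x hx).ne'
  have w1c : ContinuousOn w1 (Ici t₀) := H.hr₁c.rpow_const fun x hx => Or.inl (H.hr₁p x hx).ne'
  have w20 : ∀ t, t₀ ≤ t → 0 ≤ w2 t := fun t ht => (Real.rpow_pos_of_pos (H.hr₂p t ht) _).le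
  have w10 : ∀ t, t₀ ≤ t → 0 ≤ w1 t := fun t ht => (Real.rpow_pos_of_pos (H.hr₁p t ht) _).le
  have Qc : ContinuousOn Q (Ici t₀) := prim_cont H.hqc
  have Q0 : ∀ t, t₀ ≤ t → 0 ≤ Q t := fun t ht => prim_nonneg H.hq0 ht
  have Qm : MonotoneOn Q (Ici t₀) := prim_mono H.hqc H.hq0
  have gc : ContinuousOn (fun u => w2 u * Q u ^ (1/β)) (Ici t₀) :=
    w2c.mul (Qc.rpow_const fun x _ => Or.inr (by positivity))
  have g0 : ∀ u, t₀ ≤ u → 0 ≤ w2 u * Q u ^ (1/β) := fun u hu =>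
    mul_nonneg (w20 u hu) (Real.rpow_nonneg (Q0 u hu) _)
  have Gc : ContinuousOn G (Ici t₀) := prim_cont gc
  have G0 : ∀ t, t₀ ≤ t → 0 ≤ G t := fun t ht => prim_nonneg g0 ht
  have Gm : MonotoneOn G (Ici t₀) := prim_mono gc g0
  have fc : ContinuousOn (fun u => w1 u * G u ^ (1/α)) (Ici t₀) :=
    w1c.mul (Gc.rpow_const fun x _ => Or.inr (by positivity))
  have Gt : Tendsto G atTop atTop :=
    inner_div (by positivity) w1c w10 H.hπ₁fin Gc G0 Gm hdiv'
  have Qt : Tendsto Q atTop atTop :=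
    inner_div (by positivity) w2c w20 H.hπ₂fin Qc Q0 Qm Gt
  have Qd : ∀ t, T ≤ t → HasDerivAt Q (q t) t := fun t ht => prim_deriv H.hqc (hT.trans_le ht)
  have Gd : ∀ t, T ≤ t → HasDerivAt G (w2 t * Q t ^ (1/β)) t :=
    fun t ht => prim_deriv gc (hT.trans_le ht)
  have Fd : ∀ t, T ≤ t → HasDerivAt F (w1 t * G t ^ (1/α)) t :=
    fun t ht => prim_deriv fc (hT.trans_le ht)
  -- step 1
  obtain ⟨T2, hT2, h2⟩ := cmp_lemma (f := L2 r₁ r₂ α β y) (g := Q) (T := max T S) (k := c ^ γ)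
    (Real.rpow_pos_of_pos hc γ) (fun t ht => hL2 t (le_trans (le_max_left _ _) ht))
    (fun t ht => (Qd t (le_trans (le_max_left _ _) ht)).differentiableAt)
    (by
      intro t ht
      have hTt := le_trans (le_max_left _ _) ht
      rw [(Qd t hTt).deriv]
      have e := hE t hTt
      rw [opow_of_pos (hpos (σ t) (hTt.trans (hσT t hTt)))] at e
      have l := hlow (σ t) ((le_trans (le_max_right _ _) ht).trans (hσT t hTt))
      have := mul_le_mul_of_nonneg_left (Real.rpow_le_rpow hc.le l hγ.le)
        (H.hq0 t (hT.le.trans hTt))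
      unfold L3 at e
      linarith) Qt
  have hTT2 : T ≤ T2 := (le_max_left _ _).trans hT2
  have k2 : 0 < c ^ γ / 2 := half_pos (Real.rpow_pos_of_pos hc γ)
  -- step 2
  obtain ⟨T3, hT3, h3⟩ := cmp_lemma (f := L1 r₁ α y) (g := G) (T := T2) (k := (c ^ γ / 2) ^ (1/β))
    (Real.rpow_pos_of_pos k2 _) (fun t ht => hL1 t (hTT2.trans ht))
    (fun t ht => (Gd t (hTT2.trans ht)).differentiableAt)
    (by
      intro t ht
      have h0 := hT.le.trans (hTT2.trans ht)
      rw [(Gd t (hTT2.trans ht)).deriv]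
      exact le_of_opow hβ (H.hr₂p t h0) k2 (Q0 t h0) (h2 t ht)) Gt
  have hTT3 : T ≤ T3 := hTT2.trans hT3
  have k3 : 0 < (c ^ γ / 2) ^ (1/β) / 2 := half_pos (Real.rpow_pos_of_pos k2 _)
  -- step 3
  obtain ⟨T4, hT4, h4⟩ := cmp_lemma (f := y) (g := F) (T := T3)
    (k := ((c ^ γ / 2) ^ (1/β) / 2) ^ (1/α))
    (Real.rpow_pos_of_pos k3 _) (fun t ht => hy t (hTT3.trans ht))
    (fun t ht => (Fd t (hTT3.trans ht)).differentiableAt)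
    (by
      intro t ht
      have h0 := hT.le.trans (hTT3.trans ht)
      rw [(Fd t (hTT3.trans ht)).deriv]
      exact le_of_opow hα (H.hr₁p t h0) k3 (G0 t h0) (h3 t ht)) hdiv'
  obtain ⟨t, ht1, ht2⟩ := ((hdiv'.eventually_ge_atTop 0).and (eventually_ge_atTop T4)).exists
  have a := h4 t ht2
  have b := hpos t (hTT3.trans (hT4.trans ht2))
  have k4 := half_pos (Real.rpow_pos_of_pos k3 (1/α))
  have := mul_nonneg k4.le ht1
  linarith

lemma L1_neg (r₁ : ℝ → ℝ) (α : ℝ) (y : ℝ → ℝ) : L1 r₁ α (-y) = - L1 r₁ α y := by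
  funext t
  simp [L1, deriv.neg, opow_neg']

lemma L2_neg (r₁ r₂ : ℝ → ℝ) (α β : ℝ) (y : ℝ → ℝ) :
    L2 r₁ r₂ α β (-y) = - L2 r₁ r₂ α β y := by
  funext t
  simp [L2, L1_neg, deriv.neg, opow_neg']

lemma L3_neg (r₁ r₂ : ℝ → ℝ) (α β : ℝ) (y : ℝ → ℝ) (t : ℝ) :
    L3 r₁ r₂ α β (-y) t = - L3 r₁ r₂ α β y t := by
  simp [L3, L2_neg, deriv.neg]

theorem propertyA_of_div (t₀ α β γ : ℝ) (r₁ r₂ q σ : ℝ → ℝ)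
    (H : Hyp t₀ α β γ r₁ r₂ q σ)
    (hdiv : Filter.Tendsto (fun t => ∫ v in t₀..t, r₁ v ^ (-(1/α)) *
      (∫ u in t₀..v, r₂ u ^ (-(1/β)) * (∫ s in t₀..u, q s) ^ (1/β)) ^ (1/α))
      Filter.atTop Filter.atTop) :
    PropertyA t₀ α β γ r₁ r₂ q σ := by
  rintro y ⟨T, hT, hyc, hy, -, hL1, -, hL2, hE, -⟩
  rw [or_iff_not_imp_left]
  intro hosc
  unfold Oscillatory at hosc
  push Not at hosc
  obtain ⟨T', hT'⟩ := hosc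
  set S := max T T' + 1 with hS
  have hTS : T < S := by have := le_max_left T T'; linarith
  have hTS' : T' ≤ S := by have := le_max_right T T'; linarith
  have nh : ∀ t, S ≤ t → Ici T ∈ nhds t := fun t ht => Ici_mem_nhds (hTS.trans_le ht)
  have hne : ∀ t, S ≤ t → y t ≠ 0 := fun t ht => hT' t (hTS'.trans ht)
  have dy : ∀ t, S ≤ t → DifferentiableAt ℝ y t := fun t ht => hy.differentiableAt (nh t ht)
  have d1 : ∀ t, S ≤ t → DifferentiableAt ℝ (L1 r₁ α y) t :=
    fun t ht => hL1.differentiableAt (nh t ht)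
  have d2 : ∀ t, S ≤ t → DifferentiableAt ℝ (L2 r₁ r₂ α β y) t :=
    fun t ht => hL2.differentiableAt (nh t ht)
  have hE' : ∀ t, S ≤ t → L3 r₁ r₂ α β y t + q t * opow (y (σ t)) γ = 0 :=
    fun t ht => hE t (hTS.le.trans ht)
  have hcS : ContinuousOn y (Ici S) := fun t ht => (dy t ht).continuousAt.continuousWithinAt
  have hpre : IsPreconnected (y '' Ici S) := isPreconnected_Ici.image y hcS
  have hz : (0 : ℝ) ∉ y '' Ici S := by
    rintro ⟨t, ht, h0⟩
    exact hne t ht h0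
  rcases (hne S le_rfl).lt_or_gt with hs | hs
  · have hneg : ∀ t, S ≤ t → y t < 0 := by
      intro t ht
      by_contra hc
      push Not at hc
      exact hz (hpre.Icc_subset ⟨S, self_mem_Ici, rfl⟩ ⟨t, ht, rfl⟩ ⟨hs.le, hc⟩)
    have := main_pos t₀ α β γ r₁ r₂ q σ H hdiv (-y) S (hT.trans_lt hTS)
      (fun t ht => (dy t ht).neg)
      (fun t ht => by rw [L1_neg]; exact (d1 t ht).neg)
      (fun t ht => by rw [L2_neg]; exact (d2 t ht).neg)
      (fun t ht => by
        rw [L3_neg, Pi.neg_apply, opow_neg']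
        linarith [hE' t ht])
      (fun t ht => by simpa using hneg t ht)
    simpa using this.neg
  · have hp : ∀ t, S ≤ t → 0 < y t := by
      intro t ht
      by_contra hc
      push Not at hc
      exact hz (hpre.Icc_subset ⟨t, ht, rfl⟩ ⟨S, self_mem_Ici, rfl⟩ ⟨hc, hs.le⟩)
    exact main_pos t₀ α β γ r₁ r₂ q σ H hdiv y S (hT.trans_lt hTS) dy d1 d2 hE' hp
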